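/- The expected number of calls to complete an (n,m)-Bingo card equals E[B] = (m·n + 1)·(1 − S_n), where S_n = Σ_{∅ ≠ X ⊆ 𝓛} (−1)^{|X|+1} / (m(X)+1). -/

import Mathlib

open Finset

/-- The row of an `n × n` Bingo board through index `i`. -/
def bingoRow (n : ℕ) (i : Fin n) : Finset (Fin n × Fin n) :=
  Finset.univ.filter (fun s => s.1 = i)

/-- The column of an `n × n` Bingo board through index `j`. -/
def bingoCol (n : ℕ) (j : Fin n) : Finset (Fin n × Fin n) :=
  Finset.univ.filter (fun s => s.2 = j)

/-- The main diagonal `{(i,i)}`. -/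
def bingoDiag (n : ℕ) : Finset (Fin n × Fin n) :=
  Finset.univ.filter (fun s => (s.2 : ℕ) = (s.1 : ℕ))

/-- The anti-diagonal `{(i, n-1-i)}`. -/
def bingoAntiDiag (n : ℕ) : Finset (Fin n × Fin n) :=
  Finset.univ.filter (fun s => (s.2 : ℕ) = n - 1 - (s.1 : ℕ))

/-- The set `𝓛` of winning lines: `n` rows, `n` columns and the two diagonals. -/
def bingoLines (n : ℕ) : Finset (Finset (Fin n × Fin n)) :=
  (Finset.univ.image (bingoRow n)) ∪ (Finset.univ.image (bingoCol n)) ∪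
    {bingoDiag n, bingoAntiDiag n}

/-- An `(n,m)`-Bingo card: an injective assignment of numbers such that column `j`
only uses numbers in `[m*j, m*(j+1))`. -/
def IsBingoCard (n m : ℕ) (c : Fin n × Fin n → Fin (m * n)) : Prop :=
  Function.Injective c ∧
    ∀ i j : Fin n, m * (j : ℕ) ≤ (c (i, j) : ℕ) ∧ (c (i, j) : ℕ) < m * ((j : ℕ) + 1)

/-- Bingo is achieved within the first `k` calls of `σ`: some winning line has all of its
numbers among `σ 0, …, σ (k-1)`. -/
def BingoWins (n m : ℕ) (c : Fin n × Fin n → Fin (m * n))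
    (σ : Equiv.Perm (Fin (m * n))) (k : ℕ) : Prop :=
  ∃ L ∈ bingoLines n, ∀ s ∈ L, ∃ t : Fin (m * n), (t : ℕ) < k ∧ σ t = c s

/-- `S_n = ∑_{∅ ≠ X ⊆ 𝓛} (-1)^{|X|+1} / (m(X)+1)`, where `m(X)` is the number of squares
covered by the union of the lines in `X`. -/
noncomputable def Sn (n : ℕ) : ℝ :=
  ∑ X ∈ (bingoLines n).powerset.filter (fun X => X.Nonempty),
    (-1 : ℝ) ^ (X.card + 1) / (((X.sup id).card : ℝ) + 1)

/-!
Let `T_A` be the number of calls until every number of the set `A` has been called. The time to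
Bingo is the minimum of `T_L` over the lines `L`, so by the maximum-minimum identity it is the sum
of `(-1) ^ (|X| + 1) * max_{L ∈ X} T_L` over the nonempty `X ⊆ 𝓛`, and this maximum is `T_A` for
the union `A` of the lines in `X`. To find the mean of `T_A`, count the numbers called after all of
`A`: there are `N - T_A` of them, and by symmetry a fixed `x ∉ A` is the last of `A ∪ {x}` with
probability `1 / (|A| + 1)`. Hence `E[T_A] = (N + 1) * (1 - 1 / (|A| + 1))`. Finally,
`∑ (-1) ^ (|X| + 1) = 1` over the nonempty `X ⊆ 𝓛`.
-/

section MaximumMinimum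

variable {ι α R : Type*} [Ring R]

theorem apply_inf'_eq_sum_powerset_nonempty [LinearOrder α] [OrderBot α] (φ : α → R)
    {s : Finset ι} (hs : s.Nonempty) (f : ι → α) :
    φ (s.inf' hs f) = ∑ X ∈ s.powerset with X.Nonempty, (-1) ^ (#X + 1) * φ (X.sup f) := by
  classical
  obtain ⟨a, ha, hmin⟩ := s.exists_mem_eq_inf' hs f
  let signedSup (X : Finset ι) : R := if X.Nonempty then (-1) ^ (#X + 1) * φ (X.sup f) else 0
  -- Adding the minimizer `a` to a nonempty set does not change its maximum, so the subsets of `s`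
  -- cancel in pairs `X`, `insert a X`, except for the pair `∅`, `{a}`.
  have signedSup_add_signedSup_insert : ∀ X ∈ (s.erase a).powerset, X ≠ ∅ →
      signedSup X + signedSup (insert a X) = 0 := by
    intro X hX hX_ne
    have hXs : X ⊆ s.erase a := mem_powerset.mp hX
    obtain ⟨b, hb⟩ := nonempty_iff_ne_empty.mpr hX_ne
    have h_sup : (insert a X).sup f = X.sup f := by
      rw [sup_insert, sup_eq_right]
      exact (hmin ▸ s.inf'_le f (mem_of_mem_erase (hXs hb))).trans (le_sup hb)
    have h_card : #(insert a X) = #X + 1 :=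
      card_insert_of_notMem fun h => notMem_erase a s (hXs h)
    simp [signedSup, h_sup, h_card, nonempty_iff_ne_empty, hX_ne, pow_succ]
  symm
  calc ∑ X ∈ s.powerset with X.Nonempty, (-1) ^ (#X + 1) * φ (X.sup f)
    _ = ∑ X ∈ (insert a (s.erase a)).powerset, signedSup X := by rw [sum_filter, insert_erase ha]
    _ = ∑ X ∈ (s.erase a).powerset, (signedSup X + signedSup (insert a X)) := by
      rw [sum_powerset_insert (notMem_erase a s), sum_add_distrib]
    _ = signedSup ∅ + signedSup (insert a ∅) :=
      sum_eq_single_of_mem ∅ (empty_mem_powerset _) signedSup_add_signedSup_insert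
    _ = φ (s.inf' hs f) := by simp [signedSup, hmin]

theorem sum_powerset_nonempty_neg_one_pow_card_add_one {s : Finset ι} (hs : s.Nonempty) :
    ∑ X ∈ s.powerset with X.Nonempty, (-1 : R) ^ (#X + 1) = 1 := by
  simpa using (apply_inf'_eq_sum_powerset_nonempty (fun _ : ℕ => (1 : R)) hs fun _ => 0).symm

end MaximumMinimum

section LastOfSet

variable {α : Type*} [LinearOrder α]

theorem card_filter_forall_apply_le_eq_one {ι : Type*} {f : ι → α} (hf : f.Injective)
    {s : Finset ι} (hs : s.Nonempty) : #{x ∈ s | ∀ a ∈ s, f a ≤ f x} = 1 := by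
  obtain ⟨x, hx, hmax⟩ := s.exists_max_image f hs
  refine card_eq_one.mpr ⟨x, ext fun y => ?_⟩
  simp only [mem_filter, mem_singleton]
  constructor
  · rintro ⟨hy, hy_max⟩
    exact hf ((hmax y hy).antisymm (hy_max x hx))
  · rintro rfl
    exact ⟨hx, hmax⟩

variable [Fintype α]

theorem card_perm_forall_apply_le_eq {s : Finset α} {x y : α} (hx : x ∈ s) (hy : y ∈ s) :
    #{σ : Equiv.Perm α | ∀ a ∈ s, σ a ≤ σ x} = #{σ : Equiv.Perm α | ∀ a ∈ s, σ a ≤ σ y} := by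
  have swap_mem_iff (a : α) : Equiv.swap x y a ∈ s ↔ a ∈ s := by
    rw [Equiv.swap_apply_def]
    split_ifs <;> simp_all
  refine card_equiv (Equiv.mulRight (Equiv.swap x y)) fun σ => ?_
  simp only [mem_filter_univ, Equiv.coe_mulRight, Equiv.Perm.mul_apply, Equiv.swap_apply_right]
  refine (Equiv.swap x y).forall_congr fun {a} => ?_
  rw [swap_mem_iff, Equiv.swap_apply_self]

theorem card_mul_card_perm_forall_apply_le {s : Finset α} {x : α} (hx : x ∈ s) :
    #s * #{σ : Equiv.Perm α | ∀ a ∈ s, σ a ≤ σ x} = (Fintype.card α).factorial :=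
  calc #s * #{σ : Equiv.Perm α | ∀ a ∈ s, σ a ≤ σ x}
    _ = ∑ y ∈ s, #{σ : Equiv.Perm α | ∀ a ∈ s, σ a ≤ σ y} :=
      (sum_const_nat fun _ hy => card_perm_forall_apply_le_eq hy hx).symm
    _ = ∑ σ : Equiv.Perm α, #{y ∈ s | ∀ a ∈ s, σ a ≤ σ y} :=
      sum_card_bipartiteAbove_eq_sum_card_bipartiteBelow _
    _ = ∑ _σ : Equiv.Perm α, 1 := by
      refine sum_congr rfl fun σ _ => ?_
      convert card_filter_forall_apply_le_eq_one σ.injective ⟨x, hx⟩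
    _ = (Fintype.card α).factorial := by
      rw [sum_const, smul_eq_mul, mul_one, card_univ, Fintype.card_perm]

theorem card_add_one_mul_card_perm_forall_apply_lt {s : Finset α} {x : α} (hx : x ∉ s) :
    (#s + 1) * #{σ : Equiv.Perm α | ∀ a ∈ s, σ a < σ x} = (Fintype.card α).factorial := by
  have forall_lt_iff (σ : Equiv.Perm α) :
      (∀ a ∈ s, σ a < σ x) ↔ ∀ a ∈ insert x s, σ a ≤ σ x := by
    rw [forall_mem_insert, and_iff_right le_rfl]
    refine forall₂_congr fun a ha => lt_iff_le_and_ne.trans (and_iff_left ?_)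
    exact σ.injective.ne (ne_of_mem_of_not_mem ha hx)
  simp only [forall_lt_iff, ← card_insert_of_notMem hx]
  exact card_mul_card_perm_forall_apply_le (mem_insert_self x s)

theorem card_add_one_mul_sum_perm_card_forall_apply_lt (s : Finset α) :
    (#s + 1) * ∑ σ : Equiv.Perm α, #{x | ∀ a ∈ s, σ a < σ x} =
      #sᶜ * (Fintype.card α).factorial := by
  have card_eq_zero_of_mem : ∀ x ∈ univ, x ∉ sᶜ →
      #{σ : Equiv.Perm α | ∀ a ∈ s, σ a < σ x} = 0 := by
    intro x _ hx
    rw [mem_compl, not_not] at hx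
    exact card_eq_zero.mpr (filter_eq_empty_iff.mpr fun σ _ h => (h x hx).false)
  calc (#s + 1) * ∑ σ : Equiv.Perm α, #{x | ∀ a ∈ s, σ a < σ x}
    _ = (#s + 1) * ∑ x, #{σ : Equiv.Perm α | ∀ a ∈ s, σ a < σ x} :=
      congrArg _ (sum_card_bipartiteAbove_eq_sum_card_bipartiteBelow _)
    _ = ∑ x ∈ sᶜ, (#s + 1) * #{σ : Equiv.Perm α | ∀ a ∈ s, σ a < σ x} := by
      rw [← sum_subset (subset_univ sᶜ) card_eq_zero_of_mem, mul_sum]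
    _ = #sᶜ * (Fintype.card α).factorial :=
      sum_const_nat fun x hx => card_add_one_mul_card_perm_forall_apply_lt (mem_compl.mp hx)

end LastOfSet

section CompletionTime

variable {N : ℕ}

/-- The number of calls of `σ` until every number in `A` has been called. The call `σ t` is the
`(t + 1)`-st one, and the empty set is complete before the first call. -/
def completionTime (σ : Equiv.Perm (Fin N)) (A : Finset (Fin N)) : ℕ :=
  A.sup fun a => (σ.symm a : ℕ) + 1

theorem completionTime_le_iff {σ : Equiv.Perm (Fin N)} {A : Finset (Fin N)} {k : ℕ} :
    completionTime σ A ≤ k ↔ ∀ a ∈ A, (σ.symm a : ℕ) < k :=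
  Finset.sup_le_iff

theorem completionTime_image_le_iff {ι : Type*} {σ : Equiv.Perm (Fin N)} {c : ι → Fin N}
    {L : Finset ι} {k : ℕ} :
    completionTime σ (L.image c) ≤ k ↔ ∀ s ∈ L, ∃ t : Fin N, (t : ℕ) < k ∧ σ t = c s := by
  simp only [completionTime_le_iff, forall_mem_image, ← Equiv.eq_symm_apply,
    exists_eq_right]

theorem completionTime_image_sup {ι : Type*} [DecidableEq ι] (σ : Equiv.Perm (Fin N))
    (c : ι → Fin N) (X : Finset (Finset ι)) :
    completionTime σ ((X.sup id).image c) = X.sup fun L => completionTime σ (L.image c) := by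
  refine eq_of_forall_ge_iff fun k => ?_
  simp only [Finset.sup_le_iff, completionTime_le_iff, forall_mem_image, mem_sup, id_eq]
  exact ⟨fun h L hL s hs => h ⟨L, hL, hs⟩, fun h s ⟨L, hL, hs⟩ => h L hL hs⟩

theorem card_forall_symm_lt_add_completionTime (σ : Equiv.Perm (Fin N)) (A : Finset (Fin N)) :
    #{x | ∀ a ∈ A, σ.symm a < σ.symm x} + completionTime σ A = N := by
  have h_le : completionTime σ A ≤ N := completionTime_le_iff.mpr fun a _ => (σ.symm a).isLt
  have h_not : #{x | ¬ ∀ a ∈ A, σ.symm a < σ.symm x} = completionTime σ A :=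
    calc #{x | ¬ ∀ a ∈ A, σ.symm a < σ.symm x}
      _ = #{t : Fin N | (t : ℕ) < completionTime σ A} := card_equiv σ.symm fun x => by
        simp only [mem_filter_univ, Fin.lt_def, ← completionTime_le_iff, not_le]
      _ = completionTime σ A := by rw [Fin.card_filter_val_lt, min_eq_right h_le]
  rw [← h_not, card_filter_add_card_filter_not, card_univ, Fintype.card_fin]

theorem sum_perm_completionTime (A : Finset (Fin N)) :
    ∑ σ : Equiv.Perm (Fin N), (completionTime σ A : ℝ) =
      N.factorial * ((N + 1) * (1 - 1 / (#A + 1))) := by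
  have h_later : (#A + 1 : ℝ) * ∑ σ : Equiv.Perm (Fin N),
      (#{x | ∀ a ∈ A, σ.symm a < σ.symm x} : ℝ) = (N - #A) * N.factorial := by
    have h := card_add_one_mul_sum_perm_card_forall_apply_lt A
    rw [← Equiv.sum_comp (Equiv.inv _), card_compl, Fintype.card_fin] at h
    simp only [Equiv.inv_apply, Equiv.Perm.inv_def] at h
    rw [← Nat.cast_sub (card_finset_fin_le A)]
    exact_mod_cast h
  have h_time (σ : Equiv.Perm (Fin N)) :
      (completionTime σ A : ℝ) = N - #{x | ∀ a ∈ A, σ.symm a < σ.symm x} :=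
    eq_sub_of_add_eq' (mod_cast card_forall_symm_lt_add_completionTime σ A)
  simp only [h_time, sum_sub_distrib, sum_const, card_univ, Fintype.card_perm, Fintype.card_fin,
    nsmul_eq_mul]
  field_simp
  linear_combination -h_later

end CompletionTime

section Bingo

theorem cast_eq_sum_completionTime_of_isLeast {ι : Type*} [DecidableEq ι] {N : ℕ}
    {𝓛 : Finset (Finset ι)} {c : ι → Fin N} {σ : Equiv.Perm (Fin N)} {b : ℕ}
    (hb : IsLeast {k : ℕ | ∃ L ∈ 𝓛, ∀ s ∈ L, ∃ t : Fin N, (t : ℕ) < k ∧ σ t = c s} b) :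
    (b : ℝ) = ∑ X ∈ 𝓛.powerset with X.Nonempty,
      (-1) ^ (#X + 1) * (completionTime σ ((X.sup id).image c) : ℝ) := by
  obtain ⟨L, hL, -⟩ := hb.1
  have b_eq : b = 𝓛.inf' ⟨L, hL⟩ fun L => completionTime σ (L.image c) := by
    refine hb.unique ?_
    simp only [← completionTime_image_le_iff, ← inf'_le_iff ⟨L, hL⟩]
    exact isLeast_Ici
  simp only [b_eq, completionTime_image_sup]
  exact apply_inf'_eq_sum_powerset_nonempty Nat.cast _ _

theorem bingo_expectation_general {ι : Type*} [DecidableEq ι] {N : ℕ} (𝓛 : Finset (Finset ι))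
    (c : ι → Fin N) (hc : c.Injective) (B : Equiv.Perm (Fin N) → ℕ)
    (hB : ∀ σ, IsLeast {k : ℕ | ∃ L ∈ 𝓛, ∀ s ∈ L, ∃ t : Fin N, (t : ℕ) < k ∧ σ t = c s} (B σ)) :
    (∑ σ : Equiv.Perm (Fin N), (B σ : ℝ)) / N.factorial =
      (N + 1) * (1 - ∑ X ∈ 𝓛.powerset with X.Nonempty,
        (-1 : ℝ) ^ (#X + 1) / (#(X.sup id) + 1)) := by
  obtain ⟨L, hL, -⟩ := (hB 1).1
  have sum_B : ∑ σ : Equiv.Perm (Fin N), (B σ : ℝ) = N.factorial * ((N + 1) *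
      ∑ X ∈ 𝓛.powerset with X.Nonempty, (-1 : ℝ) ^ (#X + 1) * (1 - 1 / (#(X.sup id) + 1))) := by
    simp only [fun σ => cast_eq_sum_completionTime_of_isLeast (hB σ)]
    rw [sum_comm]
    simp only [← mul_sum, sum_perm_completionTime, card_image_of_injective _ hc]
    simp only [mul_sum]
    exact sum_congr rfl fun X _ => by ring
  rw [sum_B, mul_div_cancel_left₀ _ (Nat.cast_ne_zero.mpr N.factorial_ne_zero)]
  simp only [mul_one_sub, mul_one_div, sum_sub_distrib,
    sum_powerset_nonempty_neg_one_pow_card_add_one ⟨L, hL⟩]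

theorem nonempty_of_mem_bingoLines {n : ℕ} (hn : 1 ≤ n) {L : Finset (Fin n × Fin n)}
    (hL : L ∈ bingoLines n) : L.Nonempty := by
  simp only [bingoLines, mem_union, mem_image, mem_univ, true_and, mem_insert,
    mem_singleton] at hL
  rcases hL with (⟨i, rfl⟩ | ⟨j, rfl⟩) | rfl | rfl
  · exact ⟨(i, i), by simp [bingoRow]⟩
  · exact ⟨(j, j), by simp [bingoCol]⟩
  · exact ⟨(⟨0, hn⟩, ⟨0, hn⟩), by simp [bingoDiag]⟩
  · exact ⟨(⟨0, hn⟩, ⟨n - 1, by lia⟩), by simp [bingoAntiDiag]⟩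

theorem BingoWins.one_le {n m k : ℕ} {c : Fin n × Fin n → Fin (m * n)}
    {σ : Equiv.Perm (Fin (m * n))} (h : BingoWins n m c σ k) (hn : 1 ≤ n) : 1 ≤ k := by
  obtain ⟨L, hL, h_called⟩ := h
  obtain ⟨s, hs⟩ := nonempty_of_mem_bingoLines hn hL
  obtain ⟨t, ht, -⟩ := h_called s hs
  exact Nat.one_le_of_lt ht

theorem setOf_one_le_and_bingoWins {n m : ℕ} (hn : 1 ≤ n)
    (c : Fin n × Fin n → Fin (m * n)) (σ : Equiv.Perm (Fin (m * n))) :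
    {k : ℕ | 1 ≤ k ∧ BingoWins n m c σ k} = {k : ℕ | BingoWins n m c σ k} :=
  Set.ext fun _ => and_iff_right_of_imp (·.one_le hn)

end Bingo

/-- the expected number of calls to complete an `(n,m)`-Bingo card is
`(m·n + 1)·(1 - S_n)`. -/
theorem bingo_expectation (n m : ℕ) (hn : 1 ≤ n) (hm : n ≤ m)
    (c : Fin n × Fin n → Fin (m * n)) (hc : IsBingoCard n m c)
    (B : Equiv.Perm (Fin (m * n)) → ℕ)
    (hB : ∀ σ, IsLeast {k : ℕ | 1 ≤ k ∧ BingoWins n m c σ k} (B σ)) :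
    (∑ σ : Equiv.Perm (Fin (m * n)), (B σ : ℝ)) / (Nat.factorial (m * n)) =
      ((m * n : ℕ) + 1) * (1 - Sn n) :=
  bingo_expectation_general (bingoLines n) c hc.1 B
    fun σ => setOf_one_le_and_bingoWins hn c σ ▸ hB σ
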